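/- arXiv:math/0512195 — 2 statements merged into one kernel-verified Lean document; each statement's English description precedes it below -/
import Mathlib

section
/- The function D is a metric on the set of finite Borel measures on E = [0,∞]: D(μ,ν) is finite for all finite measures μ, ν; D(μ,ν) = 0 if and only if μ = ν; D is symmetric; and D satisfies the triangle inequality. -/
/-!
The height function `r ↦ H^ν_r` is a reparametrized quantile function of `ν`: the support of the
erased measure reaches exactly up to its cut point, so `H^ν_r = inf {s | ⟨ν,1⟩ - r ≤ ν [0,s]}`
(`Hr_eq_eraseCut`). Right-continuity of `s ↦ ν [0,s]` then gives
`H^ν_r ≤ s ↔ ⟨ν,1⟩ - r ≤ ν [0,s]` (`eraseCut_le_iff`).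

Hence `r ↦ H^ν_r` is antitone, so `G ∘ H^ν` is measurable and the triangle inequality integrates.
Moreover `H^ν_r = 0` for `r ≥ ⟨ν,1⟩`, so the integrand of `D` is bounded by `1` and supported
on a bounded interval, which gives finiteness. Finally, if `D(μ,ν) = 0`, the total masses agree and
`H^μ = H^ν` almost everywhere; a discrepancy `μ [0,s] < ν [0,s]` would make
`H^ν_r ≤ s < H^μ_r` on a whole interval of `r`, so the distribution functions agree and `μ = ν`.
-/

open MeasureTheory Set Filter Topology ENNReal

noncomputable section

/-- `mH ν` is the supremum of the closed support of a Borel measure `ν` on `E = [0,∞]`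
(a point is in the support iff every open neighbourhood has positive measure),
with the convention `sSup ∅ = 0`. -/
def mH (ν : Measure ℝ≥0∞) : ℝ≥0∞ :=
  sSup {x : ℝ≥0∞ | ∀ U : Set ℝ≥0∞, IsOpen U → x ∈ U → 0 < ν U}

/-- The point at which the erased measure `k_a ν` is cut. -/
def eraseCut (ν : Measure ℝ≥0∞) (a : ℝ≥0∞) : ℝ≥0∞ :=
  sInf {s : ℝ≥0∞ | ν Set.univ - a ≤ ν (Set.Iic s)}

/-- The erased measure `k_a ν` : the measure `ν` erased by mass `a` backward from the top.
For a finite measure `ν` it is the unique finite measure satisfying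
`eraseMass a ν (Set.Iic s) = min (ν (Set.Iic s)) (ν Set.univ - a)` for all `s`;
in particular it is `0` as soon as `a ≥ ν Set.univ`. -/
def eraseMass (a : ℝ≥0∞) (ν : Measure ℝ≥0∞) : Measure ℝ≥0∞ :=
  ν.restrict (Set.Iio (eraseCut ν a)) +
    (ν Set.univ - a - ν (Set.Iio (eraseCut ν a))) • Measure.dirac (eraseCut ν a)

/-- `Hr ν r = H^ν_r = H^{k_r ν}`, the height of the measure `ν` erased by mass `r`. -/
def Hr (ν : Measure ℝ≥0∞) (r : ℝ≥0∞) : ℝ≥0∞ := mH (eraseMass r ν)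

/-- The distance `D(μ,ν) = |⟨μ,1⟩ - ⟨ν,1⟩| + ∫₀^∞ d(H^μ_r, H^ν_r) dr` on finite measures
on `E = [0,∞]`, where `d(x,y) = |G x - G y|`. -/
def Ddist (G : ℝ≥0∞ → ℝ) (μ ν : Measure ℝ≥0∞) : ℝ≥0∞ :=
  ENNReal.ofReal |(μ Set.univ).toReal - (ν Set.univ).toReal| +
    ∫⁻ r in Set.Ioi (0:ℝ),
      ENNReal.ofReal |G (Hr μ (ENNReal.ofReal r)) - G (Hr ν (ENNReal.ofReal r))|

/-- The support of the erased measure always reaches up to the cut point, so `H^ν_r` is the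
generalized inverse `inf {s | ⟨ν,1⟩ - r ≤ ν [0,s]}`. For `r ≥ ⟨ν,1⟩` both sides are `0`. -/
lemma Hr_eq_eraseCut (ν : Measure ℝ≥0∞) (a : ℝ≥0∞) : Hr ν a = eraseCut ν a := by
  apply le_antisymm
  · refine sSup_le fun x hx => ?_
    by_contra! h
    refine (hx (Ioi (eraseCut ν a)) isOpen_Ioi h).ne' ?_
    have : Ioi (eraseCut ν a) ∩ Iio (eraseCut ν a) = ∅ := by
      ext y
      simpa using fun h => le_of_lt h
    simp [eraseMass, Measure.restrict_apply measurableSet_Ioi, this]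
  · refine le_of_forall_lt fun s hs => ?_
    have hpos : eraseMass a ν (Ioi s) ≠ 0 := by
      intro h0
      have h1 : eraseMass a ν (Ioi s) = ν (Ioi s ∩ Iio (eraseCut ν a)) +
          (ν univ - a - ν (Iio (eraseCut ν a))) := by
        simp [eraseMass, Measure.restrict_apply measurableSet_Ioi, hs]
      rw [h1, add_eq_zero, tsub_eq_zero_iff_le] at h0
      -- With no mass between `s` and the cut point, `s` would already be an admissible cut point.
      have h2 : ν (Iio (eraseCut ν a)) ≤ ν (Iic s) := by
        calc ν (Iio (eraseCut ν a)) ≤ ν (Iic s ∪ (Ioi s ∩ Iio (eraseCut ν a))) := by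
              refine measure_mono fun y hy => ?_
              rcases le_or_gt y s with h | h
              · exact Or.inl h
              · exact Or.inr ⟨h, hy⟩
          _ ≤ ν (Iic s) + ν (Ioi s ∩ Iio (eraseCut ν a)) := measure_union_le _ _
          _ = ν (Iic s) := by rw [h0.1, add_zero]
      have h3 : eraseCut ν a ≤ s := sInf_le (h0.2.trans h2)
      exact h3.not_gt hs
    obtain ⟨x, hx, hx'⟩ := exists_mem_forall_mem_nhdsWithin_pos_measure hpos
    refine lt_of_lt_of_le hx (le_sSup fun U hU hxU => ?_)
    exact hx' U (mem_nhdsWithin_of_mem_nhds (hU.mem_nhds hxU))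

/-- Galois-type relation between the cut point and the distribution function; the forward
direction is right-continuity of `s ↦ ν [0,s]`. -/
lemma eraseCut_le_iff (ν : Measure ℝ≥0∞) [IsFiniteMeasure ν] (a s : ℝ≥0∞) :
    eraseCut ν a ≤ s ↔ ν univ - a ≤ ν (Iic s) := by
  refine ⟨fun h => ?_, fun h => sInf_le h⟩
  rcases eq_or_ne s ⊤ with rfl | hs
  · simp
  have hs' : s < ⊤ := hs.lt_top
  have key : Tendsto (ν ∘ Iic) (𝓝[>] s) (𝓝 (ν (⋂ r > s, Iic r))) :=
    tendsto_measure_biInter_gt (fun _ _ => measurableSet_Iic.nullMeasurableSet)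
      (fun i j _ hij => Iic_subset_Iic.mpr hij) ⟨⊤, hs', measure_ne_top _ _⟩
  have hI : (⋂ r > s, Iic r) = Iic s := by
    ext y
    simpa using ⟨fun h => le_of_forall_gt_imp_ge_of_dense h, fun h r hr => h.trans hr.le⟩
  rw [hI] at key
  have : (𝓝[>] s).NeBot := nhdsGT_neBot_of_exists_gt ⟨⊤, hs'⟩
  refine ge_of_tendsto key ?_
  filter_upwards [self_mem_nhdsWithin] with t ht
  obtain ⟨u, hu, hut⟩ := sInf_lt_iff.mp (lt_of_le_of_lt h ht)
  exact le_trans hu (measure_mono (Iic_subset_Iic.mpr hut.le))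

lemma Hr_antitone (ν : Measure ℝ≥0∞) : Antitone (Hr ν) := by
  intro a b hab
  rw [Hr_eq_eraseCut, Hr_eq_eraseCut]
  exact sInf_le_sInf fun s hs => le_trans (tsub_le_tsub_left hab _) hs

lemma Hr_eq_zero (ν : Measure ℝ≥0∞) {a : ℝ≥0∞} (h : ν univ ≤ a) : Hr ν a = 0 := by
  rw [Hr_eq_eraseCut]
  refine le_antisymm (sInf_le ?_) zero_le
  simp [tsub_eq_zero_of_le h]

lemma measurable_G_Hr {G : ℝ≥0∞ → ℝ} (hGm : StrictMono G) (ν : Measure ℝ≥0∞) :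
    Measurable fun r : ℝ => G (Hr ν (ENNReal.ofReal r)) :=
  Antitone.measurable fun _ _ h =>
    hGm.monotone (Hr_antitone ν (ENNReal.ofReal_le_ofReal h))

lemma measurable_integrand {G : ℝ≥0∞ → ℝ} (hGm : StrictMono G) (μ ν : Measure ℝ≥0∞) :
    Measurable fun r : ℝ => ENNReal.ofReal
      |G (Hr μ (ENNReal.ofReal r)) - G (Hr ν (ENNReal.ofReal r))| :=
  ((measurable_G_Hr hGm μ).sub (measurable_G_Hr hGm ν)).norm.ennreal_ofReal

/-- If the distribution functions satisfy `μ [0,s] < ν [0,s]`, then `H^ν_r ≤ s < H^μ_r` for every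
`r` in the nonempty open interval `(⟨μ,1⟩ - ν [0,s], ⟨μ,1⟩ - μ [0,s])`, so the two
height functions cannot agree almost everywhere. -/
lemma measure_Iic_le_of_ae_eq (μ ν : Measure ℝ≥0∞) [IsFiniteMeasure μ] [IsFiniteMeasure ν]
    (hm : μ univ = ν univ)
    (h : ∀ᵐ r ∂(volume.restrict (Ioi (0 : ℝ))),
      Hr μ (ENNReal.ofReal r) = Hr ν (ENNReal.ofReal r)) (s : ℝ≥0∞) :
    ν (Iic s) ≤ μ (Iic s) := by
  by_contra! hlt
  have hν : ν (Iic s) ≤ μ univ := hm ▸ measure_mono (subset_univ _)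
  have hlt' : μ.real (Iic s) < ν.real (Iic s) :=
    (ENNReal.toReal_lt_toReal (measure_ne_top _ _) (measure_ne_top _ _)).mpr hlt
  have hν' : ν.real (Iic s) ≤ μ.real univ := ENNReal.toReal_mono (measure_ne_top _ _) hν
  rw [ae_restrict_iff' measurableSet_Ioi] at h
  have hzero : volume (Ioo (μ.real univ - ν.real (Iic s)) (μ.real univ - μ.real (Iic s))) = 0 := by
    refine measure_mono_null (fun r hr => ?_) (ae_iff.mp h)
    have hr0 : 0 < r := by linarith [hr.1]
    have hμs : 0 ≤ μ.real (Iic s) := measureReal_nonneg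
    have e1 : μ univ - ENNReal.ofReal r = ENNReal.ofReal (μ.real univ - r) := by
      rw [ENNReal.ofReal_sub _ hr0.le, ofReal_measureReal]
    have c1 : Hr ν (ENNReal.ofReal r) ≤ s := by
      rw [Hr_eq_eraseCut, eraseCut_le_iff, ← hm, e1, ← ofReal_measureReal (μ := ν) (s := Iic s)]
      exact ENNReal.ofReal_le_ofReal (by linarith [hr.1])
    have c2 : ¬ Hr μ (ENNReal.ofReal r) ≤ s := by
      rw [Hr_eq_eraseCut, eraseCut_le_iff, e1, ← ofReal_measureReal (μ := μ) (s := Iic s), not_le]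
      exact (ENNReal.ofReal_lt_ofReal_iff_of_nonneg hμs).mpr (by linarith [hr.2])
    intro heq
    exact c2 ((heq hr0).symm ▸ c1)
  rw [Real.volume_Ioo, ENNReal.ofReal_eq_zero] at hzero
  linarith

lemma Ddist_lt_top {G : ℝ≥0∞ → ℝ} (hGm : StrictMono G) (hG0 : G 0 = 0) (hG1 : G ⊤ ≤ 1)
    (μ ν : Measure ℝ≥0∞) [IsFiniteMeasure μ] [IsFiniteMeasure ν] : Ddist G μ ν < ⊤ := by
  refine ENNReal.add_lt_top.mpr ⟨ENNReal.ofReal_lt_top, ?_⟩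
  -- The integrand is at most `1`, and vanishes beyond the larger of the two masses.
  set M : ℝ := max (μ.real univ) (ν.real univ) with hM
  have hle : ∀ r ∈ Ioi (0 : ℝ),
      ENNReal.ofReal |G (Hr μ (ENNReal.ofReal r)) - G (Hr ν (ENNReal.ofReal r))| ≤
        (Iic M).indicator 1 r := by
    intro r hr
    by_cases hrM : r ≤ M
    · rw [indicator_of_mem (show r ∈ Iic M from hrM), Pi.one_apply, ENNReal.ofReal_le_one]
      have h01 : ∀ x, 0 ≤ G x ∧ G x ≤ 1 := fun x =>
        ⟨hG0 ▸ hGm.monotone zero_le, (hGm.monotone le_top).trans hG1⟩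
      have h1 := h01 (Hr μ (ENNReal.ofReal r))
      have h2 := h01 (Hr ν (ENNReal.ofReal r))
      rw [abs_le]
      constructor <;> linarith [h1.1, h1.2, h2.1, h2.2]
    · have hz : ∀ (ρ : Measure ℝ≥0∞) [IsFiniteMeasure ρ], ρ.real univ ≤ M →
          Hr ρ (ENNReal.ofReal r) = 0 := fun ρ _ h => Hr_eq_zero ρ <| by
        rw [← ofReal_measureReal (μ := ρ) (s := univ)]
        exact ENNReal.ofReal_le_ofReal (h.trans (not_le.mp hrM).le)
      rw [hz μ (le_max_left _ _), hz ν (le_max_right _ _)]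
      simp
  calc _ ≤ ∫⁻ r in Ioi (0 : ℝ), (Iic M).indicator 1 r :=
        setLIntegral_mono' measurableSet_Ioi hle
    _ = volume (Iic M ∩ Ioi 0) := by
        rw [lintegral_indicator_one measurableSet_Iic, Measure.restrict_apply measurableSet_Iic]
    _ < ⊤ := by
        rw [Iic_inter_Ioi, Real.volume_Ioc]
        exact ENNReal.ofReal_lt_top

lemma eq_of_Ddist_eq_zero {G : ℝ≥0∞ → ℝ} (hGm : StrictMono G)
    (μ ν : Measure ℝ≥0∞) [IsFiniteMeasure μ] [IsFiniteMeasure ν] (h : Ddist G μ ν = 0) :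
    μ = ν := by
  obtain ⟨h1, h2⟩ := add_eq_zero.mp h
  have hm : μ univ = ν univ := by
    rw [ENNReal.ofReal_eq_zero, abs_nonpos_iff, sub_eq_zero] at h1
    exact (ENNReal.toReal_eq_toReal_iff' (measure_ne_top _ _) (measure_ne_top _ _)).mp h1
  rw [lintegral_eq_zero_iff (measurable_integrand hGm μ ν)] at h2
  have h3 : ∀ᵐ r ∂(volume.restrict (Ioi (0 : ℝ))),
      Hr μ (ENNReal.ofReal r) = Hr ν (ENNReal.ofReal r) := by
    filter_upwards [h2] with r hr
    rw [Pi.zero_apply, ENNReal.ofReal_eq_zero, abs_nonpos_iff, sub_eq_zero] at hr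
    exact hGm.injective hr
  refine Measure.ext_of_Iic μ ν fun s => le_antisymm ?_ ?_
  · exact measure_Iic_le_of_ae_eq ν μ hm.symm (h3.mono fun _ h => h.symm) s
  · exact measure_Iic_le_of_ae_eq μ ν hm h3 s

lemma Ddist_triangle {G : ℝ≥0∞ → ℝ} (hGm : StrictMono G) (μ ν ρ : Measure ℝ≥0∞) :
    Ddist G μ ρ ≤ Ddist G μ ν + Ddist G ν ρ := by
  have tri : ∀ x y z : ℝ, ENNReal.ofReal |x - z| ≤
      ENNReal.ofReal |x - y| + ENNReal.ofReal |y - z| := fun x y z => by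
    rw [← ENNReal.ofReal_add (abs_nonneg _) (abs_nonneg _)]
    exact ENNReal.ofReal_le_ofReal (abs_sub_le x y z)
  unfold Ddist
  rw [add_add_add_comm, ← lintegral_add_left (measurable_integrand hGm μ ν)]
  exact add_le_add (tri _ _ _) (lintegral_mono fun r => tri _ _ _)

/-- `D` is a metric on the set of finite Borel measures on `E = [0,∞]` :
it is finite, vanishes exactly on the diagonal, is symmetric and satisfies the triangle
inequality. -/
theorem Ddist_is_metric (G : ℝ≥0∞ → ℝ) (hGc : Continuous G) (hGm : StrictMono G)
    (hG0 : G 0 = 0) (hG1 : G ⊤ ≤ 1) :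
    (∀ (μ ν : Measure ℝ≥0∞), IsFiniteMeasure μ → IsFiniteMeasure ν → Ddist G μ ν < ⊤) ∧
    (∀ (μ ν : Measure ℝ≥0∞), IsFiniteMeasure μ → IsFiniteMeasure ν →
      (Ddist G μ ν = 0 ↔ μ = ν)) ∧
    (∀ (μ ν : Measure ℝ≥0∞), IsFiniteMeasure μ → IsFiniteMeasure ν →
      Ddist G μ ν = Ddist G ν μ) ∧
    (∀ (μ ν ρ : Measure ℝ≥0∞), IsFiniteMeasure μ → IsFiniteMeasure ν → IsFiniteMeasure ρ →
      Ddist G μ ρ ≤ Ddist G μ ν + Ddist G ν ρ) := by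
  refine ⟨fun μ ν _ _ => Ddist_lt_top hGm hG0 hG1 μ ν,
    fun μ ν _ _ => ⟨eq_of_Ddist_eq_zero hGm μ ν, ?_⟩, fun μ ν _ _ => ?_,
    fun μ ν ρ _ _ _ => Ddist_triangle hGm μ ν ρ⟩
  · rintro rfl
    simp [Ddist]
  · simp only [Ddist, abs_sub_comm]
end
end

section
/- For every finite Borel measure μ on E = [0,∞], every r ∈ [0, ⟨μ,1⟩], and every bounded Borel measurable f : E → ℝ, one has ∫_E f d(k_rμ) = ∫_r^{⟨μ,1⟩} f(H^μ_v) dv. -/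
/-!
Two facts carry the proof. First, the explicit cut-and-atom measure `eraseMass a μ` has the
expected distribution function `s ↦ min (μ (Iic s)) (μ univ - a)`, by continuity of `μ` from
above and from below at the cut point. Secondly, `mH ν ≤ s` exactly when `ν` does not charge
`Ioi s`, so `Hr μ v ≤ s` exactly when `μ univ - v ≤ μ (Iic s)`: the height `v ↦ Hr μ v` is a
generalized inverse of the distribution function of `μ`. Hence the image of Lebesgue measure on
`(r, μ univ]` under `v ↦ Hr μ v` gives `Iic s` the mass `min (μ (Iic s)) (μ univ - r)`, which
identifies it with `eraseMass r μ`; the claim is then a change of variables.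
-/

open MeasureTheory Set Filter Topology ENNReal

noncomputable section

theorem mH_le_iff (ν : Measure ℝ≥0∞) (s : ℝ≥0∞) : mH ν ≤ s ↔ ν (Set.Ioi s) = 0 := by
  constructor
  · intro h
    -- Each point above `s` has a null open neighbourhood, and `[0,∞]` is second countable.
    refine measure_null_of_locally_null _ fun x hx => ?_
    have hx' : x ∉ {x : ℝ≥0∞ | ∀ U : Set ℝ≥0∞, IsOpen U → x ∈ U → 0 < ν U} :=
      fun hmem => absurd ((le_sSup hmem).trans h) (not_le.2 hx)
    simp only [Set.mem_ofPred_eq, not_forall, not_lt, nonpos_iff_eq_zero] at hx'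
    obtain ⟨U, hU, hxU, h0⟩ := hx'
    exact ⟨U, mem_nhdsWithin_of_mem_nhds (hU.mem_nhds hxU), h0⟩
  · intro h
    refine sSup_le fun x hx => ?_
    by_contra! hlt
    exact (hx _ isOpen_Ioi hlt).ne' h

/-- The infimum defining the cut point is attained, by continuity from above. -/
theorem le_measure_Iic_eraseCut (μ : Measure ℝ≥0∞) [IsFiniteMeasure μ] (a : ℝ≥0∞) :
    μ Set.univ - a ≤ μ (Set.Iic (eraseCut μ a)) := by
  have hne : {s : ℝ≥0∞ | μ Set.univ - a ≤ μ (Set.Iic s)}.Nonempty := ⟨⊤, by simp⟩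
  obtain ⟨u, hu, hlim, hmem⟩ := exists_seq_tendsto_sInf hne (OrderBot.bddBelow _)
  have heq : Set.Iic (eraseCut μ a) = ⋂ n, Set.Iic (u n) := by
    ext x
    simp only [Set.mem_Iic, Set.mem_iInter]
    exact ⟨fun h n => h.trans (sInf_le (hmem n)), fun h => ge_of_tendsto' hlim h⟩
  have hanti : Antitone fun n => Set.Iic (u n) := fun i j hij => Set.Iic_subset_Iic.2 (hu hij)
  rw [heq, hanti.measure_iInter (fun n => measurableSet_Iic.nullMeasurableSet)
    ⟨0, measure_ne_top _ _⟩]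
  exact le_iInf hmem

theorem measure_Iic_lt_of_lt_eraseCut (μ : Measure ℝ≥0∞) {a s : ℝ≥0∞}
    (h : s < eraseCut μ a) : μ (Set.Iic s) < μ Set.univ - a := by
  by_contra! hle
  have hcut : eraseCut μ a ≤ s := sInf_le hle
  exact absurd hcut (not_le.2 h)

/-- The atom in `eraseMass` has nonnegative mass: the truncated subtraction there is genuine. -/
theorem measure_Iio_eraseCut_le (μ : Measure ℝ≥0∞) (a : ℝ≥0∞) :
    μ (Set.Iio (eraseCut μ a)) ≤ μ Set.univ - a := by
  rcases eq_or_ne (eraseCut μ a) 0 with h0 | h0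
  · simp [h0]
  obtain ⟨u, hu, hmem, hlim⟩ := exists_seq_strictMono_tendsto' (pos_iff_ne_zero.2 h0)
  have hmono : Monotone fun n => Set.Iic (u n) :=
    fun i j hij => Set.Iic_subset_Iic.2 (hu.monotone hij)
  rw [← iUnion_Iic_eq_Iio_of_lt_of_tendsto (fun n => (hmem n).2) hlim, hmono.measure_iUnion]
  exact iSup_le fun n => (measure_Iic_lt_of_lt_eraseCut μ (hmem n).2).le

theorem eraseMass_Iic (μ : Measure ℝ≥0∞) [IsFiniteMeasure μ] (a s : ℝ≥0∞) :
    eraseMass a μ (Set.Iic s) = min (μ (Set.Iic s)) (μ Set.univ - a) := by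
  rw [eraseMass, Measure.add_apply, Measure.smul_apply, Measure.restrict_apply measurableSet_Iic,
    Measure.dirac_apply' _ measurableSet_Iic, smul_eq_mul]
  rcases lt_or_ge s (eraseCut μ a) with h | h
  · have h1 : Set.Iic s ∩ Set.Iio (eraseCut μ a) = Set.Iic s :=
      Set.inter_eq_left.2 fun x hx => lt_of_le_of_lt hx h
    rw [h1, min_eq_left (measure_Iic_lt_of_lt_eraseCut μ h).le,
      Set.indicator_of_notMem (by simpa using h), mul_zero, add_zero]
  · have h1 : Set.Iic s ∩ Set.Iio (eraseCut μ a) = Set.Iio (eraseCut μ a) :=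
      Set.inter_eq_right.2 fun x hx => (le_of_lt hx).trans h
    rw [h1, min_eq_right ((le_measure_Iic_eraseCut μ a).trans
        (measure_mono (Set.Iic_subset_Iic.2 h))),
      Set.indicator_of_mem (by simpa using h), Pi.one_apply, mul_one,
      add_tsub_cancel_of_le (measure_Iio_eraseCut_le μ a)]

theorem eraseMass_univ (μ : Measure ℝ≥0∞) [IsFiniteMeasure μ] (a : ℝ≥0∞) :
    eraseMass a μ Set.univ = μ Set.univ - a := by
  have h := eraseMass_Iic μ a ⊤
  rwa [Set.Iic_top, min_eq_right tsub_le_self] at h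

instance isFiniteMeasure_eraseMass (μ : Measure ℝ≥0∞) [IsFiniteMeasure μ] (a : ℝ≥0∞) :
    IsFiniteMeasure (eraseMass a μ) :=
  ⟨by rw [eraseMass_univ]; exact tsub_le_self.trans_lt (measure_lt_top _ _)⟩

/-- The height process is a generalized inverse of the distribution function of `μ`. -/
theorem Hr_le_iff (μ : Measure ℝ≥0∞) [IsFiniteMeasure μ] (a s : ℝ≥0∞) :
    Hr μ a ≤ s ↔ μ Set.univ - a ≤ μ (Set.Iic s) := by
  rw [Hr, mH_le_iff, ← Set.compl_Iic, measure_compl measurableSet_Iic (measure_ne_top _ _),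
    tsub_eq_zero_iff_le, eraseMass_univ, eraseMass_Iic, le_min_iff]
  simp

theorem Hr_ofReal_le_iff (μ : Measure ℝ≥0∞) [IsFiniteMeasure μ] {v : ℝ} (hv : 0 ≤ v)
    (s : ℝ≥0∞) :
    Hr μ (ENNReal.ofReal v) ≤ s ↔ (μ Set.univ).toReal - (μ (Set.Iic s)).toReal ≤ v := by
  rw [Hr_le_iff, tsub_le_iff_right,
    ← ENNReal.toReal_le_toReal (measure_ne_top _ _) (by finiteness),
    ENNReal.toReal_add (measure_ne_top _ _) ENNReal.ofReal_ne_top, ENNReal.toReal_ofReal hv,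
    sub_le_iff_le_add']

theorem measurable_Hr (μ : Measure ℝ≥0∞) [IsFiniteMeasure μ] : Measurable (Hr μ) := by
  refine Antitone.measurable fun a b hab => ?_
  rw [Hr_le_iff]
  exact (tsub_le_tsub_left hab _).trans ((Hr_le_iff μ a _).1 le_rfl)

/-- `k_r μ` is the image of Lebesgue measure on `(r, ⟨μ,1⟩]` under the height process. -/
theorem map_Hr (μ : Measure ℝ≥0∞) [IsFiniteMeasure μ]
    (r : ℝ) (hr0 : 0 ≤ r) :
    (volume.restrict (Set.Ioc r (μ Set.univ).toReal)).map
      (fun v => Hr μ (ENNReal.ofReal v)) = eraseMass (ENNReal.ofReal r) μ := by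
  refine Measure.ext_of_Iic _ _ fun s => ?_
  have hmeas : Measurable fun v => Hr μ (ENNReal.ofReal v) :=
    (measurable_Hr μ).comp ENNReal.measurable_ofReal
  rw [Measure.map_apply hmeas measurableSet_Iic,
    Measure.restrict_apply (hmeas measurableSet_Iic), eraseMass_Iic]
  have hset : (fun v => Hr μ (ENNReal.ofReal v)) ⁻¹' Set.Iic s ∩ Set.Ioc r (μ Set.univ).toReal
      = Set.Ici ((μ Set.univ).toReal - (μ (Set.Iic s)).toReal)
        ∩ Set.Ioc r (μ Set.univ).toReal := by
    ext v
    simp only [Set.mem_inter_iff, Set.mem_preimage, Set.mem_Iic, Set.mem_Ici]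
    exact and_congr_left fun hv => Hr_ofReal_le_iff μ (hr0.trans hv.1.le) s
  have hsub : μ Set.univ - ENNReal.ofReal r = ENNReal.ofReal ((μ Set.univ).toReal - r) := by
    rw [ENNReal.ofReal_sub _ hr0, ENNReal.ofReal_toReal (measure_ne_top _ _)]
  have hIic : μ (Set.Iic s) = ENNReal.ofReal (μ (Set.Iic s)).toReal :=
    (ENNReal.ofReal_toReal (measure_ne_top _ _)).symm
  rw [hset, hsub, hIic, ENNReal.toReal_ofReal ENNReal.toReal_nonneg]
  generalize (μ Set.univ).toReal = M at *
  generalize (μ (Set.Iic s)).toReal = m at *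
  rcases le_or_gt (M - m) r with h | h
  · have h1 : Set.Ici (M - m) ∩ Set.Ioc r M = Set.Ioc r M :=
      Set.inter_eq_right.2 fun v hv => h.trans hv.1.le
    rw [h1, Real.volume_Ioc, min_eq_right (ENNReal.ofReal_le_ofReal (by linarith))]
  · have h1 : Set.Ici (M - m) ∩ Set.Ioc r M = Set.Icc (M - m) M := by
      ext v
      simp only [Set.mem_inter_iff, Set.mem_Ici, Set.mem_Ioc, Set.mem_Icc]
      exact ⟨fun hv => ⟨hv.1, hv.2.2⟩, fun hv => ⟨hv.1, h.trans_le hv.1, hv.2⟩⟩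
    rw [h1, Real.volume_Icc, min_eq_left (ENNReal.ofReal_le_ofReal (by linarith)),
      _root_.sub_sub_cancel]

/-- For every finite Borel measure `μ` on `E = [0,∞]`, every
`r ∈ [0, ⟨μ,1⟩]` and every bounded Borel measurable `f : E → ℝ`,
`∫_E f d(k_r μ) = ∫_r^{⟨μ,1⟩} f(H^μ_v) dv`. -/
theorem integral_eraseMass (μ : Measure ℝ≥0∞) [IsFiniteMeasure μ]
    (r : ℝ) (hr0 : 0 ≤ r) (hr1 : r ≤ (μ Set.univ).toReal)
    (f : ℝ≥0∞ → ℝ) (hfm : Measurable f) (hfb : ∃ C, ∀ x, |f x| ≤ C) :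
    ∫ x, f x ∂(eraseMass (ENNReal.ofReal r) μ)
      = ∫ v in r..(μ Set.univ).toReal, f (Hr μ (ENNReal.ofReal v)) := by
  rw [intervalIntegral.integral_of_le hr1, ← map_Hr μ r hr0]
  exact integral_map ((measurable_Hr μ).comp ENNReal.measurable_ofReal).aemeasurable
    hfm.aestronglyMeasurable
end
end
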